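/- Constant density profiles in the disturbed range develop critical-density segments around the origin: if c < 1, ρ ∈ (ρ*, 1−ρ*) and v_0(q) = ρq, then for all t > 0: v(x,t) = (1−ρ*)x − t·c/4 for −t(ρ−ρ*) ≤ x ≤ 0; v(x,t) = ρ*·x − t·c/4 for 0 < x ≤ t(1−ρ*−ρ); and v(x,t) = ρx − t·ρ(1−ρ) for x ≤ −t(ρ−ρ*) and for x ≥ t(1−ρ*−ρ). -/

import Mathlib

/-!
The value is the maximum of two candidates: the undisturbed value `ρ x - t ρ (1 - ρ)`, and the
value `min (ρs x) ((1 - ρs) x) - t c / 4` of paths that use the slow site.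

Upper bound. Since `g0` is the Legendre conjugate of `r (1 - r)`, every slope `r ∈ [0, 1]` calibrates
the running cost from below: on a time interval `[a, b]` on which `λ(w) r (1 - r) ≥ K`, the cost is
at least `K (b - a) - r (w b - w a)` (`cost_lower`). A path that avoids the origin is calibrated by
`r = ρ`. Any other path is cut at its first and last visits `τ ≤ σ` to the origin: slope `ρ` is
used before `τ`, slope `1/2` with `K = c / 4` on `[τ, σ]` (valid on and off the origin alike), and
either critical slope after `σ`, for which `r (1 - r) = c / 4`. As `ρ (1 - ρ) ≥ c / 4`, replacing
`ρ (1 - ρ)` by `c / 4` on `[0, τ]` only loses (`value_upper`).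

Attainment. The undisturbed value is attained by the line of characteristic speed `1 - 2 ρ`, and the
critical one by waiting at the origin and then leaving with speed `±(1 - 2 ρs)`.
-/


open Filter Set MeasureTheory intervalIntegral

/-- The Legendre conjugate `g₀` of the TASEP flux `f₀(ρ) = ρ(1−ρ)`:
`g₀(x) = −x` for `x ≤ −1`, `(1−x)²/4` for `−1 ≤ x ≤ 1`, and `0` for `x ≥ 1`. -/
noncomputable def g0 (x : ℝ) : ℝ :=
  if x ≤ -1 then -x else if x ≤ 1 then (1 - x) ^ 2 / 4 else 0

/-- The macroscopic rate profile: `λ(x) = 1` for `x ≠ 0` and `λ(0) = c`. -/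
noncomputable def lam (c : ℝ) (x : ℝ) : ℝ := if x = 0 then c else 1

/-- `w` is piecewise `C¹` on `[a,b]`: continuous on `[a,b]` and `C¹` on each cell of
some finite partition `a = p 0 < p 1 < ⋯ < p k = b`. -/
def PiecewiseC1On (w : ℝ → ℝ) (a b : ℝ) : Prop :=
  ContinuousOn w (Set.Icc a b) ∧
    ∃ (k : ℕ) (p : ℕ → ℝ), p 0 = a ∧ p k = b ∧ (∀ i < k, p i < p (i + 1)) ∧
      ∀ i < k, ContDiffOn ℝ 1 w (Set.Icc (p i) (p (i + 1)))

/-- The running cost `∫₀ᵗ λ(w(s)) g₀(w′(s)/λ(w(s))) ds` of a path `w : [0,t] → ℝ`. -/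
noncomputable def pathCost (c t : ℝ) (w : ℝ → ℝ) : ℝ :=
  ∫ s in (0 : ℝ)..t, lam c (w s) * g0 (deriv w s / lam c (w s))

/-- The variational (Hopf–Lax type) solution
`v(x,t) = sup { v₀(w(0)) − ∫₀ᵗ λ(w(s)) g₀(w′(s)/λ(w(s))) ds : w piecewise C¹, w(t) = x }`. -/
noncomputable def vVar (c : ℝ) (v0 : ℝ → ℝ) (x t : ℝ) : ℝ :=
  sSup { a | ∃ w : ℝ → ℝ, PiecewiseC1On w 0 t ∧ w t = x ∧ a = v0 (w 0) - pathCost c t w }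

/-- The optimal control cost
`I(x,t,q) = inf { ∫₀ᵗ λ(w(s)) g₀(w′(s)/λ(w(s))) ds : w piecewise C¹, w(0) = q, w(t) = x }`. -/
noncomputable def Icost (c : ℝ) (x t q : ℝ) : ℝ :=
  sInf { a | ∃ w : ℝ → ℝ, PiecewiseC1On w 0 t ∧ w 0 = q ∧ w t = x ∧ a = pathCost c t w }

/-! ### Calibration of the running cost -/

/-- Fenchel–Young inequality for the conjugate pair `r (1 - r)`, `g0`. -/
lemma g0_ge (r p : ℝ) (h0 : 0 ≤ r) (h1 : r ≤ 1) : r * (1 - r) - p * r ≤ g0 p := by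
  unfold g0
  split_ifs with h h'
  · nlinarith [mul_nonneg (sub_nonneg.2 h1) (by linarith : 0 ≤ -p - r)]
  · nlinarith [sq_nonneg ((1 - p) / 2 - r)]
  · nlinarith [mul_nonneg h0 (by linarith : 0 ≤ p + r - 1)]

lemma g0_nonneg (p : ℝ) : 0 ≤ g0 p := by
  have := g0_ge 0 p le_rfl zero_le_one
  linarith

lemma g0_le (p : ℝ) : g0 p ≤ |p| + 1 := by
  unfold g0
  split_ifs with h h'
  · linarith [neg_le_abs p]
  · have := abs_nonneg p
    nlinarith
  · have := abs_nonneg p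
    linarith

lemma g0_mid (r : ℝ) (h0 : 0 ≤ r) (h1 : r ≤ 1) : g0 (1 - 2 * r) = r ^ 2 := by
  unfold g0
  split_ifs with h h'
  · have : r = 1 := by linarith
    subst this; norm_num
  · ring
  · linarith

lemma measurable_g0 : Measurable g0 := by
  unfold g0
  refine Measurable.ite measurableSet_Iic (by fun_prop) (Measurable.ite measurableSet_Iic ?_ ?_) <;>
    fun_prop

lemma measurable_lam (c : ℝ) : Measurable (lam c) := by
  unfold lam
  exact Measurable.ite (measurableSet_singleton 0) (by fun_prop) (by fun_prop)

lemma lam_pos {c : ℝ} (hc : c ∈ Set.Ioo (0 : ℝ) 1) (x : ℝ) : 0 < lam c x := by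
  unfold lam; split_ifs
  · exact hc.1
  · exact one_pos

lemma lam_le {c : ℝ} (hc : c ∈ Set.Ioo (0 : ℝ) 1) (x : ℝ) : lam c x ≤ 1 := by
  unfold lam; split_ifs
  · exact hc.2.le
  · exact le_rfl

lemma le_lam {c : ℝ} (hc : c ∈ Set.Ioo (0 : ℝ) 1) (x : ℝ) : c ≤ lam c x := by
  unfold lam; split_ifs
  · exact le_rfl
  · exact hc.2.le

lemma pw_deriv_integrable {w : ℝ → ℝ} {a b : ℝ} (hw : PiecewiseC1On w a b) :
    IntervalIntegrable (deriv w) volume a b := by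
  obtain ⟨-, k, p, h0, hk, hlt, hC⟩ := hw
  rw [← h0, ← hk]
  refine IntervalIntegrable.trans_iterate fun i hi => ?_
  have hl := hlt i hi
  have h1 : IntervalIntegrable (derivWithin w (Icc (p i) (p (i + 1)))) volume (p i) (p (i + 1)) := by
    apply ContinuousOn.intervalIntegrable_of_Icc hl.le
    exact (hC i hi).continuousOn_derivWithin (uniqueDiffOn_Icc hl) le_rfl
  rw [intervalIntegrable_iff_integrableOn_Ioo_of_le hl.le] at h1 ⊢
  refine h1.congr_fun (fun s hs => ?_) measurableSet_Ioo
  exact derivWithin_of_mem_nhds (Icc_mem_nhds hs.1 hs.2)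

/-- A piecewise `C¹` path is differentiable away from its partition points. -/
lemma pw_deriv_off {w : ℝ → ℝ} {a b : ℝ} (hw : PiecewiseC1On w a b) :
    ∃ S : Set ℝ, S.Countable ∧ ∀ s ∈ Icc a b \ S, HasDerivAt w (deriv w s) s := by
  obtain ⟨-, k, p, h0, hk, hlt, hC⟩ := hw
  refine ⟨range p, countable_range p, fun s hs => ?_⟩
  -- the cell containing `s` ends at the first partition point beyond `s`
  have hex : ∃ j, j ≤ k ∧ s ≤ p j := ⟨k, le_rfl, hk ▸ hs.1.2⟩
  classical
  obtain ⟨hj, hsj⟩ := Nat.find_spec hex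
  have hmin := fun m hm => Nat.find_min hex (m := m) hm
  generalize Nat.find hex = j at hj hsj hmin
  have hne : ∀ i, p i ≠ s := fun i h => hs.2 ⟨i, h⟩
  cases j with
  | zero => exact absurd (le_antisymm (h0 ▸ hs.1.1) hsj) (hne 0)
  | succ i =>
    have h1 : p i < s := by
      have := hmin i (Nat.lt_succ_self i)
      by_contra! h
      exact this ⟨by omega, h⟩
    have h2 : s < p (i + 1) := lt_of_le_of_ne hsj (hne _).symm
    exact (((hC i (by omega)).differentiableOn one_ne_zero).differentiableAt
      (Icc_mem_nhds h1 h2)).hasDerivAt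

/-- The integrand is dominated by `|deriv w| + 1`, so integrability of the cost follows from that of
the derivative. -/
lemma cost_integrable {c : ℝ} (hc : c ∈ Set.Ioo (0 : ℝ) 1) {w : ℝ → ℝ} {a b : ℝ} (hab : a ≤ b)
    (hw : PiecewiseC1On w a b) :
    IntervalIntegrable (fun s => lam c (w s) * g0 (deriv w s / lam c (w s))) volume a b := by
  have hd := pw_deriv_integrable hw
  rw [intervalIntegrable_iff_integrableOn_Icc_of_le hab] at hd ⊢
  have hwm : AEMeasurable w (volume.restrict (Icc a b)) := hw.1.aemeasurable measurableSet_Icc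
  have hl := (measurable_lam c).comp_aemeasurable hwm
  have hF : AEMeasurable (fun s => lam c (w s) * g0 (deriv w s / lam c (w s)))
      (volume.restrict (Icc a b)) :=
    hl.mul (measurable_g0.comp_aemeasurable ((measurable_deriv w).aemeasurable.div hl))
  have hone : Integrable (fun _ : ℝ => (1 : ℝ)) (volume.restrict (Icc a b)) := integrable_const 1
  refine (hd.norm.add hone).mono' hF.aestronglyMeasurable (ae_of_all _ fun s => ?_)
  have hp := lam_pos hc (w s)
  have h1 := g0_le (deriv w s / lam c (w s))
  rw [abs_div, abs_of_pos hp] at h1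
  have h2 := mul_le_mul_of_nonneg_left h1 hp.le
  rw [mul_add, mul_div_cancel₀ _ hp.ne'] at h2
  rw [Real.norm_of_nonneg (mul_nonneg hp.le (g0_nonneg _))]
  simp only [Pi.add_apply, Real.norm_eq_abs]
  linarith [lam_le hc (w s)]

/-- Calibration: a slope `r ∈ [0, 1]` bounds the cost from below on any time subinterval. -/
lemma cost_lower {c : ℝ} (hc : c ∈ Set.Ioo (0 : ℝ) 1) {w : ℝ → ℝ} {t : ℝ} (ht : 0 ≤ t)
    (hw : PiecewiseC1On w 0 t) {a b : ℝ} (ha : 0 ≤ a) (hab : a ≤ b) (hb : b ≤ t)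
    (r K : ℝ) (h0 : 0 ≤ r) (h1 : r ≤ 1)
    (hK : ∀ s ∈ Ioo a b, K ≤ lam c (w s) * (r * (1 - r))) :
    K * (b - a) - r * (w b - w a) ≤
      ∫ s in a..b, lam c (w s) * g0 (deriv w s / lam c (w s)) := by
  have hsub : uIcc a b ⊆ uIcc 0 t := by
    rw [uIcc_of_le hab, uIcc_of_le ht]; exact Icc_subset_Icc ha hb
  have hd := (pw_deriv_integrable hw).mono_set hsub
  have hF := (cost_integrable hc ht hw).mono_set hsub
  obtain ⟨S, hS, hder⟩ := pw_deriv_off hw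
  have hftc : ∫ s in a..b, deriv w s = w b - w a := by
    refine integral_eq_of_hasDerivAt_off_countable_of_le w (deriv w) hab hS
      (hw.1.mono (Icc_subset_Icc ha hb)) (fun s hs => hder s ⟨⟨?_, ?_⟩, hs.2⟩) hd
    · linarith [hs.1.1]
    · linarith [hs.1.2]
  have hL : ∫ s in a..b, (K - r * deriv w s) = K * (b - a) - r * (w b - w a) := by
    rw [intervalIntegral.integral_sub (by simp) (hd.const_mul r),
      intervalIntegral.integral_const_mul, hftc]
    simp [mul_comm]
  rw [← hL]
  refine integral_mono_on_of_le_Ioo hab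
    ((intervalIntegrable_const).sub (hd.const_mul r)) hF fun s hs => ?_
  have hp := lam_pos hc (w s)
  have h2 := mul_le_mul_of_nonneg_left (g0_ge r (deriv w s / lam c (w s)) h0 h1) hp.le
  have h3 : lam c (w s) * (r * (1 - r) - deriv w s / lam c (w s) * r)
      = lam c (w s) * (r * (1 - r)) - r * deriv w s := by
    field_simp
  linarith [hK s hs]

/-- A path ending at `x` either never meets the origin and is worth at most the undisturbed value,
or it meets the origin and is worth at most `r x - t c / 4` for both critical slopes `r`. -/
lemma value_upper {c : ℝ} (hc : c ∈ Set.Ioo (0 : ℝ) 1) {ρs ρ t : ℝ} (hs0 : 0 ≤ ρs)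
    (hs1 : ρs ≤ 1) (hsc : ρs * (1 - ρs) = c / 4) (hρ : ρ ∈ Set.Ioo ρs (1 - ρs)) (ht : 0 ≤ t)
    {w : ℝ → ℝ} (hw : PiecewiseC1On w 0 t) :
    ρ * w 0 - pathCost c t w ≤ ρ * w t - t * (ρ * (1 - ρ)) ∨
    (ρ * w 0 - pathCost c t w ≤ (1 - ρs) * w t - t * c / 4 ∧
      ρ * w 0 - pathCost c t w ≤ ρs * w t - t * c / 4) := by
  obtain ⟨hρ1, hρ2⟩ := hρ
  have hlam : ∀ s, w s ≠ 0 → lam c (w s) = 1 := fun s h => by simp [lam, h]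
  set Z : Set ℝ := Icc 0 t ∩ w ⁻¹' {0} with hZ
  have hZc : IsCompact Z := isCompact_Icc.of_isClosed_subset
    (hw.1.preimage_isClosed_of_isClosed isClosed_Icc isClosed_singleton) inter_subset_left
  rcases Z.eq_empty_or_nonempty with hE | hN
  · left
    have := cost_lower hc ht hw le_rfl ht le_rfl ρ (ρ * (1 - ρ)) (by linarith) (by linarith)
      (fun s hs => by
        rw [hlam s fun h => ?_, one_mul]
        have : s ∈ Z := ⟨⟨hs.1.le, hs.2.le⟩, h⟩
        simp [hE] at this)
    unfold pathCost
    linarith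
  · right
    obtain ⟨τ, hτ, hτm⟩ := hZc.exists_isLeast hN
    obtain ⟨σ, hσ, hσm⟩ := hZc.exists_isGreatest hN
    have hwτ : w τ = 0 := hτ.2
    have hwσ : w σ = 0 := hσ.2
    have hτσ : τ ≤ σ := hτm hσ
    obtain ⟨⟨hτ0, hτt⟩, -⟩ := hτ
    obtain ⟨⟨hσ0, hσt⟩, -⟩ := hσ
    have hF := cost_integrable hc ht hw
    have hsub : ∀ a b, 0 ≤ a → a ≤ b → b ≤ t → IntervalIntegrable
        (fun s => lam c (w s) * g0 (deriv w s / lam c (w s))) volume a b := fun a b ha hab hb =>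
      hF.mono_set (by rw [uIcc_of_le hab, uIcc_of_le ht]; exact Icc_subset_Icc ha hb)
    have hsplit : pathCost c t w =
        (∫ s in (0 : ℝ)..τ, lam c (w s) * g0 (deriv w s / lam c (w s))) +
        (∫ s in τ..σ, lam c (w s) * g0 (deriv w s / lam c (w s))) +
        (∫ s in σ..t, lam c (w s) * g0 (deriv w s / lam c (w s))) := by
      unfold pathCost
      rw [integral_add_adjacent_intervals (hsub _ _ le_rfl hτ0 hτt) (hsub _ _ hτ0 hτσ hσt),
        integral_add_adjacent_intervals (hsub _ _ le_rfl hσ0 hσt) (hsub _ _ hσ0 hσt le_rfl)]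
    have e1 := cost_lower hc ht hw le_rfl hτ0 hτt ρ (ρ * (1 - ρ)) (by linarith) (by linarith)
      (fun s hs => by
        rw [hlam s fun h => ?_, one_mul]
        have : τ ≤ s := hτm ⟨⟨hs.1.le, by linarith [hs.2]⟩, h⟩
        linarith [hs.2])
    have e2 := cost_lower hc ht hw hτ0 hτσ hσt (1 / 2) (c / 4) (by norm_num) (by norm_num)
      (fun s _ => by linarith [le_lam hc (w s)])
    have e3 : ∀ r, 0 ≤ r → r ≤ 1 → r * (1 - r) = c / 4 → _ := fun r h0 h1 hr =>
      cost_lower hc ht hw hσ0 hσt le_rfl r (c / 4) h0 h1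
      (fun s hs => by
        rw [hlam s fun h => ?_, one_mul, hr]
        have : s ≤ σ := hσm ⟨⟨by linarith [hs.1], hs.2.le⟩, h⟩
        linarith [hs.1])
    have e4 := e3 (1 - ρs) (by linarith) (by linarith) (by linarith)
    have e5 := e3 ρs hs0 hs1 hsc
    have hf : 0 ≤ τ * (ρ * (1 - ρ) - c / 4) := by
      refine mul_nonneg hτ0 ?_
      nlinarith [mul_nonneg (sub_nonneg.2 hρ1.le) (sub_nonneg.2 hρ2.le)]
    rw [hwτ, hwσ] at e2
    rw [hwτ] at e1
    rw [hwσ] at e4 e5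
    constructor <;> linarith

/-! ### Cost of affine paths -/

/-- Cost of an affine piece of speed `v` along which the rate is `l`, except possibly at the single
time `s0` at which the origin is crossed. -/
lemma seg_cost {c a b q v l s0 : ℝ} {w : ℝ → ℝ} (hab : a ≤ b)
    (hw : ∀ s ∈ Ioo a b, w s = q + v * s)
    (hl : ∀ s ∈ Ioo a b, s ≠ s0 → lam c (w s) = l) :
    IntervalIntegrable (fun s => lam c (w s) * g0 (deriv w s / lam c (w s))) volume a b ∧
    ∫ s in a..b, lam c (w s) * g0 (deriv w s / lam c (w s)) = (b - a) * (l * g0 (v / l)) := by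
  have hae : (fun s => lam c (w s) * g0 (deriv w s / lam c (w s)))
      =ᵐ[volume.restrict (Ioo a b)] fun _ => l * g0 (v / l) := by
    have h0 : ∀ᵐ s ∂(volume.restrict (Ioo a b)), s ≠ s0 :=
      ae_restrict_of_ae (by simp [ae_iff])
    filter_upwards [h0, ae_restrict_mem measurableSet_Ioo] with s hs hm
    have hd : deriv w s = v := by
      have : w =ᶠ[nhds s] fun s => q + v * s := by
        filter_upwards [Ioo_mem_nhds hm.1 hm.2] with u hu using hw u hu
      rw [this.deriv_eq]
      simp
    rw [hl s hm hs, hd]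
  constructor
  · rw [intervalIntegrable_iff_integrableOn_Ioo_of_le hab]
    exact (integrable_const _).congr hae.symm
  · rw [intervalIntegral.integral_of_le hab, integral_Ioc_eq_integral_Ioo,
      MeasureTheory.integral_congr_ae hae]
    simp [hab]

lemma line_pw (q v : ℝ) {t : ℝ} (ht : 0 < t) : PiecewiseC1On (fun s => q + v * s) 0 t := by
  refine ⟨by fun_prop, 1, fun i => i * t, by simp, by simp, fun i _ => ?_, fun i _ => ?_⟩
  · push_cast; linarith
  · exact ContDiff.contDiffOn (by fun_prop)

lemma kink_pw (v : ℝ) {m t : ℝ} (hm : 0 < m) (hmt : m < t) :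
    PiecewiseC1On (fun s => v * max 0 (s - m)) 0 t := by
  refine ⟨by fun_prop, 2, fun i => if i = 0 then 0 else if i = 1 then m else t, by simp, by simp,
    fun i hi => ?_, fun i hi => ?_⟩
  · interval_cases i <;> simp [hm, hmt]
  · interval_cases i
    · refine (contDiffOn_const (c := (0 : ℝ))).congr fun s hs => ?_
      simp at hs
      simp [max_eq_left (by linarith : s - m ≤ 0)]
    · refine (ContDiff.contDiffOn (f := fun s => v * (s - m)) (by fun_prop)).congr fun s hs => ?_
      simp at hs
      simp [max_eq_right (by linarith : 0 ≤ s - m)]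

/-- The undisturbed value is attained at `x ≠ 0` by the characteristic line. -/
lemma line_attains (c : ℝ) {ρ t x : ℝ} (h0 : 0 ≤ ρ) (h1 : ρ ≤ 1) (ht : 0 < t) (hx : x ≠ 0) :
    ∃ w : ℝ → ℝ, PiecewiseC1On w 0 t ∧ w t = x ∧
      ρ * x - t * (ρ * (1 - ρ)) = ρ * w 0 - pathCost c t w := by
  refine ⟨fun s => (x - (1 - 2 * ρ) * t) + (1 - 2 * ρ) * s, line_pw _ _ ht, by ring, ?_⟩
  have h := (seg_cost (c := c) (a := 0) (b := t) (q := x - (1 - 2 * ρ) * t) (v := 1 - 2 * ρ)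
    (l := 1) (s0 := t - x / (1 - 2 * ρ))
    (w := fun s => (x - (1 - 2 * ρ) * t) + (1 - 2 * ρ) * s) ht.le (fun s _ => rfl)
    (fun s _ hs => by
      unfold lam
      rw [if_neg]
      intro hz
      by_cases hv : 1 - 2 * ρ = 0
      · rw [hv] at hz; apply hx; linarith
      · apply hs
        field_simp
        linarith)).2
  unfold pathCost
  rw [h, div_one, g0_mid ρ h0 h1]
  ring

/-- Waiting at the origin and then leaving with the speed `1 - 2 r` of a critical density `r`. -/
lemma kink_attains {c ρ r t T : ℝ} (h0 : 0 ≤ r) (h1 : r ≤ 1)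
    (hr : r * (1 - r) = c / 4) (hr2 : 1 - 2 * r ≠ 0) (hT : 0 < T) (hTt : T < t) :
    ∃ w : ℝ → ℝ, PiecewiseC1On w 0 t ∧ w t = (1 - 2 * r) * T ∧
      r * ((1 - 2 * r) * T) - t * c / 4 = ρ * w 0 - pathCost c t w := by
  refine ⟨fun s => (1 - 2 * r) * max 0 (s - (t - T)), kink_pw _ (by linarith) (by linarith),
    by simp [hT.le], ?_⟩
  have e1 := seg_cost (c := c) (a := 0) (b := t - T) (q := 0) (v := 0) (l := c) (s0 := 0)
    (w := fun s => (1 - 2 * r) * max 0 (s - (t - T))) (by linarith)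
    (fun s hs => by simp [max_eq_left (by linarith [hs.2] : s - (t - T) ≤ 0)])
    (fun s hs _ => by simp [lam, max_eq_left (by linarith [hs.2] : s - (t - T) ≤ 0)])
  have e2 := seg_cost (c := c) (a := t - T) (b := t) (q := -(1 - 2 * r) * (t - T))
    (v := 1 - 2 * r) (l := 1) (s0 := 0)
    (w := fun s => (1 - 2 * r) * max 0 (s - (t - T))) (by linarith)
    (fun s hs => by
      simp only [max_eq_right (by linarith [hs.1] : 0 ≤ s - (t - T))]
      ring)
    (fun s hs _ => by
      simp only [lam, max_eq_right (by linarith [hs.1] : 0 ≤ s - (t - T))]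
      rw [if_neg]
      exact mul_ne_zero hr2 (by linarith [hs.1]))
  have hg : g0 0 = 1 / 4 := by norm_num [g0]
  unfold pathCost
  beta_reduce
  rw [← integral_add_adjacent_intervals e1.1 e2.1, e1.2, e2.2, div_one, g0_mid r h0 h1,
    zero_div, hg, max_eq_left (by linarith : 0 - (t - T) ≤ 0)]
  have : c = 4 * (r * (1 - r)) := by linarith
  rw [this]
  ring

lemma rest_attains (c ρ : ℝ) {t : ℝ} (ht : 0 < t) :
    ∃ w : ℝ → ℝ, PiecewiseC1On w 0 t ∧ w t = 0 ∧ -(t * c / 4) = ρ * w 0 - pathCost c t w := by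
  refine ⟨fun s => 0 + 0 * s, line_pw _ _ ht, by simp, ?_⟩
  have h := (seg_cost (c := c) (a := 0) (b := t) (q := 0) (v := 0) (l := c) (s0 := 0)
    (w := fun s => 0 + 0 * s) ht.le (fun s _ => rfl) (fun s _ _ => by simp [lam])).2
  have hg : g0 0 = 1 / 4 := by norm_num [g0]
  unfold pathCost
  rw [h, zero_div, hg]
  ring

lemma vVar_eq {c x t V : ℝ} {v0 : ℝ → ℝ}
    (hat : ∃ w : ℝ → ℝ, PiecewiseC1On w 0 t ∧ w t = x ∧ V = v0 (w 0) - pathCost c t w)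
    (hub : ∀ w : ℝ → ℝ, PiecewiseC1On w 0 t → w t = x → v0 (w 0) - pathCost c t w ≤ V) :
    vVar c v0 x t = V := by
  refine IsGreatest.csSup_eq ⟨hat, ?_⟩
  rintro a ⟨w, hw, hx, rfl⟩
  exact hub w hw hx

/-! ### The constant profile -/

/-- for `c < 1`, `ρ ∈ (ρ*, 1−ρ*)` and the constant profile `v₀(q) = ρq`,
segments of the critical densities `1−ρ*` and `ρ*` form around the origin:
`v(x,t) = (1−ρ*)x − tc/4` on `[−t(ρ−ρ*), 0]`, `v(x,t) = ρ*x − tc/4` on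
`(0, t(1−ρ*−ρ)]`, and `v(x,t) = ρx − tρ(1−ρ)` outside this range. -/
theorem constant_profile_disturbed
    (c : ℝ) (hc : c ∈ Set.Ioo (0 : ℝ) 1)
    (ρs : ℝ) (hρs : ρs = 1 / 2 - Real.sqrt (1 - c) / 2)
    (ρ : ℝ) (hρ : ρ ∈ Set.Ioo ρs (1 - ρs))
    (t : ℝ) (ht : 0 < t) :
    (∀ x, -(t * (ρ - ρs)) ≤ x → x ≤ 0 →
        vVar c (fun q => ρ * q) x t = (1 - ρs) * x - t * c / 4) ∧
    (∀ x, 0 < x → x ≤ t * (1 - ρs - ρ) →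
        vVar c (fun q => ρ * q) x t = ρs * x - t * c / 4) ∧
    (∀ x, x ≤ -(t * (ρ - ρs)) ∨ t * (1 - ρs - ρ) ≤ x →
        vVar c (fun q => ρ * q) x t = ρ * x - t * (ρ * (1 - ρ))) := by
  obtain ⟨hρ1, hρ2⟩ := hρ
  have hsq := Real.sq_sqrt (by linarith [hc.2] : (0 : ℝ) ≤ 1 - c)
  have hsp := Real.sqrt_pos.2 (by linarith [hc.2] : (0 : ℝ) < 1 - c)
  have hsc : ρs * (1 - ρs) = c / 4 := by rw [hρs]; nlinarith
  have hs2 : 0 < 1 - 2 * ρs := by rw [hρs]; linarith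
  have hs0 : 0 ≤ ρs := by nlinarith [hc.1]
  have hs1 : ρs ≤ 1 := by linarith
  have hub := fun w hw => value_upper hc (w := w) hs0 hs1 hsc ⟨hρ1, hρ2⟩ ht.le hw
  -- `d1` and `d2` compare the undisturbed value with the two critical ones; the sign changes at
  -- the endpoints of the disturbed range
  have d1 : ∀ x, (1 - ρs) * x - t * c / 4 - (ρ * x - t * (ρ * (1 - ρ)))
      = (1 - ρs - ρ) * (x + t * (ρ - ρs)) := fun x => by
    have : c = 4 * (ρs * (1 - ρs)) := by linarith
    rw [this]; ring
  have d2 : ∀ x, ρs * x - t * c / 4 - (ρ * x - t * (ρ * (1 - ρ)))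
      = (ρ - ρs) * (t * (1 - ρs - ρ) - x) := fun x => by
    have : c = 4 * (ρs * (1 - ρs)) := by linarith
    rw [this]; ring
  refine ⟨fun x hx1 hx2 => vVar_eq ?_ ?_, fun x hx1 hx2 => vVar_eq ?_ ?_,
    fun x hx => vVar_eq ?_ ?_⟩
  · rcases hx2.eq_or_lt with rfl | hx
    · obtain ⟨w, h1, h2, h3⟩ := rest_attains c ρ ht
      exact ⟨w, h1, h2, by rw [← h3]; ring⟩
    · obtain ⟨w, h1, h2, h3⟩ := kink_attains (c := c) (ρ := ρ) (r := 1 - ρs) (t := t)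
        (T := -x / (1 - 2 * ρs)) (by linarith) (by linarith) (by linarith)
        (by linarith) (div_pos (by linarith) hs2)
        (by rw [div_lt_iff₀ hs2]; nlinarith)
      have he : (1 - 2 * (1 - ρs)) * (-x / (1 - 2 * ρs)) = x := by
        field_simp; ring
      rw [he] at h2 h3
      exact ⟨w, h1, h2, h3⟩
  · rintro w hw rfl
    rcases hub w hw with h | h
    · have := mul_nonneg (by linarith : 0 ≤ 1 - ρs - ρ) (by linarith : 0 ≤ w t + t * (ρ - ρs))
      linarith [d1 (w t)]
    · exact h.1
  · obtain ⟨w, h1, h2, h3⟩ := kink_attains (c := c) (ρ := ρ) (r := ρs) (t := t)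
      (T := x / (1 - 2 * ρs)) hs0 hs1 hsc
      (by linarith) (div_pos (by linarith) hs2)
      (by rw [div_lt_iff₀ hs2]; nlinarith)
    have he : (1 - 2 * ρs) * (x / (1 - 2 * ρs)) = x := by
      field_simp
    rw [he] at h2 h3
    exact ⟨w, h1, h2, h3⟩
  · rintro w hw rfl
    rcases hub w hw with h | h
    · have := mul_nonneg (by linarith : 0 ≤ ρ - ρs) (by linarith : 0 ≤ t * (1 - ρs - ρ) - w t)
      linarith [d2 (w t)]
    · exact h.2
  · have a1 := mul_pos ht (by linarith : 0 < ρ - ρs)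
    have a2 := mul_pos ht (by linarith : 0 < 1 - ρs - ρ)
    refine line_attains c (by linarith) (by linarith) ht ?_
    rcases hx with hx | hx
    · exact (by linarith : x < 0).ne
    · exact (by linarith : 0 < x).ne'
  · rintro w hw rfl
    rcases hub w hw with h | h
    · exact h
    · rcases hx with hx | hx
      · have := mul_nonneg (by linarith : 0 ≤ 1 - ρs - ρ)
          (by linarith : 0 ≤ -(w t + t * (ρ - ρs)))
        linarith [d1 (w t), h.1]
      · have := mul_nonneg (by linarith : 0 ≤ ρ - ρs)
          (by linarith : 0 ≤ -(t * (1 - ρs - ρ) - w t))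
        linarith [d2 (w t), h.2]
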